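/- arXiv:0912.3568 — 2 statements merged into one kernel-verified Lean document; each statement's English description precedes it below -/
import Mathlib

section
/- Let q : ℝ → ℝ be locally integrable and let c ∈ ℝ. Suppose that for each θ ∈ ℝ, (u(·,θ), v(·,θ)) is a solution of −u″ + q·u = 0 with u(c,θ) = sin θ and v(c,θ) = cos θ, and that R : ℝ×ℝ → (0,∞) and φ : ℝ×ℝ → ℝ satisfy u(x,θ) = R(x,θ)·sin(φ(x,θ)), v(x,θ) = R(x,θ)·cos(φ(x,θ)) and φ(c,θ) = θ for all x, θ, with φ jointly continuous. Then for every fixed x ∈ ℝ, the function θ ↦ φ(x,θ) is differentiable on ℝ with derivative ∂φ/∂θ(x,θ) = 1/R(x,θ)². -/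
open MeasureTheory

/-!
The Wronskian of two solutions does not depend on `x`, so the initial data at `c` give
`u(x,s) v(x,t) - u(x,t) v(x,s) = sin (s - t)` for every `x`. For fixed `x` this identity alone
makes `(u, v)` differentiable in `θ`, with derivative the value at `θ + π/2`. Any continuous polar
angle of a differentiable plane curve `(u, v) = R (sin φ, cos φ)` has derivative
`(u' v - u v') / R²`, and here the numerator is `sin (π/2) = 1`.
-/

/-- `(u, v)` is a solution of `-u'' + q u = 0` with `v = u'`. As `q` need not be continuous, the
equation for `v` is imposed in integrated form. -/
structure IsSchrodingerSolution (q u v : ℝ → ℝ) : Prop where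
  hasDerivAt : ∀ x, HasDerivAt u (v x) x
  eq_add_integral : ∀ x y, v x = v y + ∫ t in y..x, q t * u t

namespace IsSchrodingerSolution

variable {q u v w z : ℝ → ℝ}

lemma continuous (h : IsSchrodingerSolution q u v) : Continuous u :=
  continuous_iff_continuousAt.2 fun x => (h.hasDerivAt x).continuousAt

lemma locallyIntegrable_mul (h : IsSchrodingerSolution q u v) (hq : LocallyIntegrable q) :
    LocallyIntegrable fun t => q t * u t := by
  rw [← locallyIntegrableOn_univ] at hq ⊢
  exact hq.mul_continuousOn h.continuous.continuousOn isOpen_univ.isLocallyClosed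

lemma intervalIntegrable_mul (h : IsSchrodingerSolution q u v) (hq : LocallyIntegrable q)
    (a b : ℝ) : IntervalIntegrable (fun t => q t * u t) volume a b :=
  ((h.locallyIntegrable_mul hq).integrableOn_isCompact isCompact_uIcc).intervalIntegrable

lemma eq_const_add_primitive (h : IsSchrodingerSolution q u v) (a : ℝ) :
    v = fun x => v a + ∫ t in a..x, q t * u t :=
  funext (h.eq_add_integral · a)

lemma continuous_deriv (h : IsSchrodingerSolution q u v) (hq : LocallyIntegrable q) :
    Continuous v := by
  rw [h.eq_const_add_primitive 0]
  exact continuous_const.add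
    (intervalIntegral.continuous_primitive (h.intervalIntegrable_mul hq) 0)

lemma absolutelyContinuousOnInterval_deriv (h : IsSchrodingerSolution q u v)
    (hq : LocallyIntegrable q) (a b : ℝ) : AbsolutelyContinuousOnInterval v a b := by
  have hconst : AbsolutelyContinuousOnInterval (fun _ : ℝ => v a) a b :=
    contDiff_const.contDiffOn.absolutelyContinuousOnInterval
  rw [h.eq_const_add_primitive a]
  exact hconst.add ((h.intervalIntegrable_mul hq a b)
    |>.absolutelyContinuousOnInterval_intervalIntegral Set.left_mem_uIcc)

lemma absolutelyContinuousOnInterval (h : IsSchrodingerSolution q u v)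
    (hq : LocallyIntegrable q) (a b : ℝ) : AbsolutelyContinuousOnInterval u a b := by
  have hderiv : deriv u = v := funext fun x => (h.hasDerivAt x).deriv
  have hC1 : ContDiff ℝ 1 u := by
    rw [contDiff_one_iff_deriv, hderiv]
    exact ⟨fun x => (h.hasDerivAt x).differentiableAt, h.continuous_deriv hq⟩
  exact hC1.contDiffOn.absolutelyContinuousOnInterval

lemma ae_hasDerivAt_deriv (h : IsSchrodingerSolution q u v) (hq : LocallyIntegrable q) :
    ∀ᵐ x, HasDerivAt v (q x * u x) x := by
  filter_upwards [LocallyIntegrable.ae_hasDerivAt_integral (h.locallyIntegrable_mul hq)] with x hx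
  rw [h.eq_const_add_primitive 0]
  exact (hx 0).const_add _

theorem wronskian_eq (huv : IsSchrodingerSolution q u v) (hwz : IsSchrodingerSolution q w z)
    (hq : LocallyIntegrable q) (a b : ℝ) : u a * z a - w a * v a = u b * z b - w b * v b := by
  have hac : AbsolutelyContinuousOnInterval (fun x => u x * z x - w x * v x) a b :=
    ((huv.absolutelyContinuousOnInterval hq a b).fun_mul
      (hwz.absolutelyContinuousOnInterval_deriv hq a b)).sub
    ((hwz.absolutelyContinuousOnInterval hq a b).fun_mul
      (huv.absolutelyContinuousOnInterval_deriv hq a b))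
  have hderiv : ∀ᵐ x, x ∈ Set.uIcc a b → HasDerivAt (fun x => u x * z x - w x * v x) 0 x := by
    filter_upwards [huv.ae_hasDerivAt_deriv hq, hwz.ae_hasDerivAt_deriv hq] with x hv hz _
    exact (((huv.hasDerivAt x).fun_mul hz).fun_sub ((hwz.hasDerivAt x).fun_mul hv)).congr_deriv
      (by ring)
  obtain ⟨C, hC⟩ := hac.const_of_ae_hasDerivAt_zero hderiv
  exact (hC a Set.left_mem_uIcc).trans (hC b Set.right_mem_uIcc).symm

end IsSchrodingerSolution

section PlaneCurves

open Filter Real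
open scoped Topology

variable {u v R φ : ℝ → ℝ}

lemma wronskian_add_pi_div_two (h : ∀ s t, u s * v t - u t * v s = sin (s - t)) (t : ℝ) :
    u (t + π / 2) * v t - u t * v (t + π / 2) = 1 := by
  rw [h, add_sub_cancel_left, sin_pi_div_two]

lemma eq_cos_mul_add_sin_mul_of_wronskian_eq_sin (h : ∀ s t, u s * v t - u t * v s = sin (s - t))
    (s t : ℝ) : u s = cos (s - t) * u t + sin (s - t) * u (t + π / 2) := by
  have hshift : u s * v (t + π / 2) - u (t + π / 2) * v s = -cos (s - t) := by
    rw [h, ← sub_sub, sin_sub_pi_div_two]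
  linear_combination -u s * wronskian_add_pi_div_two h t + u (t + π / 2) * h s t - u t * hshift

lemma hasDerivAt_fst_of_wronskian_eq_sin (h : ∀ s t, u s * v t - u t * v s = sin (s - t))
    (t : ℝ) : HasDerivAt u (u (t + π / 2)) t := by
  have hsub : HasDerivAt (fun s => s - t) 1 t := (hasDerivAt_id t).sub_const t
  have hcomb := (hsub.cos.mul_const (u t)).fun_add (hsub.sin.mul_const (u (t + π / 2)))
  rw [funext (eq_cos_mul_add_sin_mul_of_wronskian_eq_sin h · t)]
  exact hcomb.congr_deriv (by simp)

lemma hasDerivAt_snd_of_wronskian_eq_sin (h : ∀ s t, u s * v t - u t * v s = sin (s - t))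
    (t : ℝ) : HasDerivAt v (v (t + π / 2)) t :=
  hasDerivAt_fst_of_wronskian_eq_sin (u := v) (v := -u)
    (fun s r => by simp only [Pi.neg_apply]; linear_combination h s r) t

lemma eventually_eq_add_arctan_of_polar {a : ℝ} (hu : ∀ᶠ s in 𝓝 a, u s = R s * sin (φ s))
    (hv : ∀ᶠ s in 𝓝 a, v s = R s * cos (φ s)) (hR : ∀ᶠ s in 𝓝 a, R s ≠ 0)
    (hφ : ContinuousAt φ a) :
    ∀ᶠ s in 𝓝 a, φ s = φ a + arctan
      ((u s * cos (φ a) - v s * sin (φ a)) / (u s * sin (φ a) + v s * cos (φ a))) := by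
  have hnear : ∀ᶠ s in 𝓝 a, φ s - φ a ∈ Set.Ioo (-(π / 2)) (π / 2) := by
    refine (hφ.fun_sub continuousAt_const).eventually_mem ?_
    rw [sub_self]
    exact Ioo_mem_nhds (neg_neg_of_pos pi_div_two_pos) pi_div_two_pos
  filter_upwards [hu, hv, hR, hnear] with s hus hvs hRs hs
  have hsin : u s * cos (φ a) - v s * sin (φ a) = R s * sin (φ s - φ a) := by
    rw [hus, hvs, sin_sub]; ring
  have hcos : u s * sin (φ a) + v s * cos (φ a) = R s * cos (φ s - φ a) := by
    rw [hus, hvs, cos_sub]; ring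
  rw [hsin, hcos, mul_div_mul_left _ _ hRs, ← tan_eq_sin_div_cos, arctan_tan hs.1 hs.2,
    add_sub_cancel]

theorem hasDerivAt_polar_angle {a u' v' : ℝ} (hu' : HasDerivAt u u' a) (hv' : HasDerivAt v v' a)
    (hu : ∀ᶠ s in 𝓝 a, u s = R s * sin (φ s)) (hv : ∀ᶠ s in 𝓝 a, v s = R s * cos (φ s))
    (hR : R a ≠ 0) (hφ : ContinuousAt φ a) :
    HasDerivAt φ ((u' * v a - u a * v') / R a ^ 2) a := by
  have hua : u a = R a * sin (φ a) := hu.self_of_nhds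
  have hva : v a = R a * cos (φ a) := hv.self_of_nhds
  -- In the frame rotated by `φ a` the curve passes through the point `(0, R a)`.
  have hnum : u a * cos (φ a) - v a * sin (φ a) = 0 := by rw [hua, hva]; ring
  have hden : u a * sin (φ a) + v a * cos (φ a) = R a := by
    rw [hua, hva]
    linear_combination R a * sin_sq_add_cos_sq (φ a)
  have hnum' := (hu'.mul_const (cos (φ a))).fun_sub (hv'.mul_const (sin (φ a)))
  have hden' := (hu'.mul_const (sin (φ a))).fun_add (hv'.mul_const (cos (φ a)))
  have hR_ne : ∀ᶠ s in 𝓝 a, R s ≠ 0 := by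
    filter_upwards [hu, hv, hden'.continuousAt.eventually_ne (hden.trans_ne hR)] with s hus hvs hs
    contrapose! hs
    rw [hus, hvs, hs]; ring
  have harctan := ((hnum'.fun_div hden' (hden.trans_ne hR)).arctan).const_add (φ a)
  refine (harctan.congr_of_eventuallyEq
    (eventually_eq_add_arctan_of_polar hu hv hR_ne hφ)).congr_deriv ?_
  rw [hnum, hden, hua, hva]
  field_simp
  ring

theorem hasDerivAt_polar_angle_of_wronskian_eq_sin
    (h : ∀ s t, u s * v t - u t * v s = sin (s - t)) {a : ℝ}
    (hu : ∀ᶠ s in 𝓝 a, u s = R s * sin (φ s)) (hv : ∀ᶠ s in 𝓝 a, v s = R s * cos (φ s))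
    (hφ : ContinuousAt φ a) : HasDerivAt φ (1 / R a ^ 2) a := by
  have hbase := wronskian_add_pi_div_two h a
  have hR : R a ≠ 0 := fun hRa => by
    simp [hu.self_of_nhds, hv.self_of_nhds, hRa] at hbase
  rw [← hbase]
  exact hasDerivAt_polar_angle (hasDerivAt_fst_of_wronskian_eq_sin h a)
    (hasDerivAt_snd_of_wronskian_eq_sin h a) hu hv hR hφ

end PlaneCurves

lemma wronskian_eq_sin_of_initial_phase {q : ℝ → ℝ} {c : ℝ} {u v : ℝ → ℝ → ℝ}
    (hq : LocallyIntegrable q) (hsol : ∀ θ, IsSchrodingerSolution q (u · θ) (v · θ))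
    (hu0 : ∀ θ, u c θ = Real.sin θ) (hv0 : ∀ θ, v c θ = Real.cos θ) (x s t : ℝ) :
    u x s * v x t - u x t * v x s = Real.sin (s - t) := by
  rw [(hsol s).wronskian_eq (hsol t) hq x c, hu0, hv0, hu0, hv0, Real.sin_sub]
  ring

theorem prufer_phase_deriv_initial_phase_general {q : ℝ → ℝ} {c : ℝ} {u v : ℝ → ℝ → ℝ}
    (hq : LocallyIntegrable q) (hsol : ∀ θ, IsSchrodingerSolution q (u · θ) (v · θ))
    (hu0 : ∀ θ, u c θ = Real.sin θ) (hv0 : ∀ θ, v c θ = Real.cos θ)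
    {x θ : ℝ} {R φ : ℝ → ℝ} (huR : ∀ᶠ s in nhds θ, u x s = R s * Real.sin (φ s))
    (hvR : ∀ᶠ s in nhds θ, v x s = R s * Real.cos (φ s)) (hφ : ContinuousAt φ θ) :
    HasDerivAt φ (1 / R θ ^ 2) θ :=
  hasDerivAt_polar_angle_of_wronskian_eq_sin
    (wronskian_eq_sin_of_initial_phase hq hsol hu0 hv0 x) huR hvR hφ

/-- Derivative of the Prüfer phase with respect to the initial phase `θ`:
`∂φ/∂θ(x,θ) = 1 / R(x,θ)²`. -/
theorem prufer_phase_deriv_initial_phase (q : ℝ → ℝ) (c : ℝ)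
    (hq : LocallyIntegrable q volume)
    (u v R φ : ℝ → ℝ → ℝ)
    (hu : ∀ (θ : ℝ) (x : ℝ), HasDerivAt (fun s => u s θ) (v x θ) x)
    (hv : ∀ (θ : ℝ) (x y : ℝ), v x θ = v y θ + ∫ t in y..x, q t * u t θ)
    (hu0 : ∀ θ : ℝ, u c θ = Real.sin θ)
    (hv0 : ∀ θ : ℝ, v c θ = Real.cos θ)
    (hR : ∀ x θ : ℝ, 0 < R x θ)
    (huR : ∀ x θ : ℝ, u x θ = R x θ * Real.sin (φ x θ))
    (hvR : ∀ x θ : ℝ, v x θ = R x θ * Real.cos (φ x θ))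
    (hφ0 : ∀ θ : ℝ, φ c θ = θ)
    (hφcont : Continuous fun p : ℝ × ℝ => φ p.1 p.2) :
    ∀ x θ : ℝ, HasDerivAt (fun s => φ x s) (1 / R x θ ^ 2) θ := fun x _ =>
  prufer_phase_deriv_initial_phase_general hq (fun θ => ⟨hu θ, hv θ⟩) hu0 hv0
    (.of_forall (huR x)) (.of_forall (hvR x))
    (hφcont.comp (Continuous.prodMk_right x)).continuousAt
end

section
/- Let W, V : ℝ → ℝ be locally integrable and let c, θ ∈ ℝ. Suppose that for each λ ∈ ℝ, (u(·,λ), v(·,λ)) is a solution of −u″ + (W + λ·V)·u = 0 with u(c,λ) = sin θ and v(c,λ) = cos θ. Then for every fixed x ∈ ℝ there exist entire functions F, G : ℂ → ℂ such that F(λ) = u(x,λ) and G(λ) = v(x,λ) for all real λ; in particular λ ↦ u(x,λ) and λ ↦ v(x,λ) are real-analytic on ℝ. -/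
open MeasureTheory

/-!
For a locally integrable operator-valued kernel `K` on a compact interval, the Volterra operator
`f ↦ ∫ s in c..t, K s (f s)` has powers of norm at most `‖K‖₁ ^ n / n!`. Hence `1 - volterra K` is
invertible, and the linear system `y t = y₀ + ∫ s in c..t, K s (y s)` has the unique solution
`(1 - volterra K)⁻¹ y₀`. If `K` depends affinely on a parameter, then so does the bounded operator
`volterra K`, and since inversion is analytic the solution is entire in the parameter. The
Schrödinger equation is such a system for the pair `(u, u')`.
-/

section Resolvent

variable {𝕜 E F : Type*} [NontriviallyNormedField 𝕜] [NormedAddCommGroup E] [NormedSpace 𝕜 E]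
  [NormedAddCommGroup F] [NormedSpace 𝕜 F] [CompleteSpace F]

lemma differentiable_add_smul (x y : E) : Differentiable 𝕜 fun z : 𝕜 ↦ x + z • y :=
  (differentiable_id.smul_const y).const_add x

lemma isUnit_one_sub_of_summable_norm_pow {T : F →L[𝕜] F} (h : Summable (‖T ^ ·‖)) :
    IsUnit (1 - T) :=
  ⟨⟨1 - T, ∑' n, T ^ n, h.of_norm.one_sub_mul_tsum_pow, h.of_norm.tsum_pow_mul_one_sub⟩, rfl⟩

lemma differentiable_inverse_one_sub_apply {T : E → F →L[𝕜] F} (hT : Differentiable 𝕜 T)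
    (hunit : ∀ z, IsUnit (1 - T z)) {f : E → F} (hf : Differentiable 𝕜 f) :
    Differentiable 𝕜 fun z ↦ Ring.inverse (1 - T z) (f z) := fun z ↦
  ((hT.const_sub 1 z).inverse (hunit z)).clm_apply (hf z)

end Resolvent

section Primitive

open Set

variable {k : ℝ → ℝ} {c t : ℝ}

lemma absolutelyContinuousOnInterval_primitive_pow (hk : IntervalIntegrable k volume c t) (n : ℕ) :
    AbsolutelyContinuousOnInterval (fun x ↦ (∫ r in c..x, k r) ^ (n + 1)) c t := by
  have hprim := hk.absolutelyContinuousOnInterval_intervalIntegral left_mem_uIcc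
  induction n with
  | zero => simpa using hprim
  | succ n ih => simpa only [pow_succ _ (n + 1)] using ih.fun_mul hprim

lemma integral_mul_primitive_pow (hk : IntervalIntegrable k volume c t) (n : ℕ) :
    ∫ s in c..t, k s * (∫ r in c..s, k r) ^ n = (∫ r in c..t, k r) ^ (n + 1) / (n + 1) := by
  have hderiv : ∀ᵐ s, s ∈ uIoc c t → deriv (fun x ↦ (∫ r in c..x, k r) ^ (n + 1)) s =
      (n + 1) * (k s * (∫ r in c..s, k r) ^ n) := by
    filter_upwards [hk.ae_hasDerivAt_integral] with s hs hst
    have := ((hs (uIoc_subset_uIcc hst) c left_mem_uIcc).fun_pow (n + 1)).deriv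
    simpa [mul_assoc, mul_comm (k s)] using this
  have hftc := (absolutelyContinuousOnInterval_primitive_pow hk n).integral_deriv_eq_sub
  rw [intervalIntegral.integral_congr_ae hderiv, intervalIntegral.integral_const_mul,
    intervalIntegral.integral_same, zero_pow n.succ_ne_zero, sub_zero] at hftc
  rw [eq_div_iff n.cast_add_one_ne_zero, mul_comm, hftc]

lemma abs_integral_mul_abs_primitive_pow (hk : IntervalIntegrable k volume c t)
    (hk₀ : ∀ s, 0 ≤ k s) (n : ℕ) :
    |∫ s in c..t, k s * |∫ r in c..s, k r| ^ n| = |∫ r in c..t, k r| ^ (n + 1) / (n + 1) := by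
  obtain ⟨ε, hε, hsign⟩ :
      ∃ ε : ℝ, |ε| = 1 ∧ ∀ s ∈ uIcc c t, |∫ r in c..s, k r| = ε * ∫ r in c..s, k r := by
    rcases le_total c t with hct | htc
    · refine ⟨1, abs_one, fun s hs ↦ ?_⟩
      rw [uIcc_of_le hct] at hs
      rw [one_mul, abs_of_nonneg (intervalIntegral.integral_nonneg hs.1 fun r _ ↦ hk₀ r)]
    · refine ⟨-1, by simp, fun s hs ↦ ?_⟩
      rw [uIcc_of_ge htc] at hs
      rw [neg_one_mul, intervalIntegral.integral_symm, abs_neg, neg_neg,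
        abs_of_nonneg (intervalIntegral.integral_nonneg hs.2 fun r _ ↦ hk₀ r)]
  have hpull : ∫ s in c..t, k s * |∫ r in c..s, k r| ^ n =
      ε ^ n * ∫ s in c..t, k s * (∫ r in c..s, k r) ^ n := by
    rw [← intervalIntegral.integral_const_mul]
    refine intervalIntegral.integral_congr fun s hs ↦ ?_
    simp only [hsign s hs, mul_pow, mul_left_comm]
  rw [hpull, integral_mul_primitive_pow hk, abs_mul, abs_pow, hε, one_pow, one_mul, abs_div,
    abs_pow, abs_of_pos (n.cast_add_one_pos (α := ℝ))]

end Primitive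

section IntervalIntegrable

open Set

variable {E : Type*} [NormedAddCommGroup E] {f : ℝ → E} {μ : Measure ℝ} {a b : ℝ}

lemma intervalIntegrable_of_locallyIntegrable (hf : LocallyIntegrable f μ) (a b : ℝ) :
    IntervalIntegrable f μ a b :=
  (hf.integrableOn_isCompact isCompact_uIcc).intervalIntegrable

lemma intervalIntegrable_of_mem_Icc (hf : IntervalIntegrable f μ a b) (c t : Icc a b) :
    IntervalIntegrable f μ c t :=
  hf.mono_set (uIcc_subset_uIcc (Icc_subset_uIcc c.2) (Icc_subset_uIcc t.2))

lemma abs_integral_norm_le_of_mem_Icc (hf : IntervalIntegrable f μ a b) (c t : Icc a b) :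
    |∫ s in c..t, ‖f s‖ ∂μ| ≤ |∫ s in a..b, ‖f s‖ ∂μ| := by
  refine intervalIntegral.abs_integral_mono_interval ?_ (.of_forall fun _ ↦ norm_nonneg _) hf.norm
  rw [uIoc_of_le (c.2.1.trans c.2.2)]
  exact Ioc_subset_Ioc (le_inf c.2.1 t.2.1) (sup_le c.2.2 t.2.2)

end IntervalIntegrable

section Volterra

open Set
open scoped Nat

variable {𝕜 E : Type*} [NontriviallyNormedField 𝕜] [NormedAddCommGroup E] [NormedSpace 𝕜 E]

lemma intervalIntegrable_clm_apply {F : Type*} [NormedAddCommGroup F] [NormedSpace 𝕜 F]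
    {μ : Measure ℝ} {a b : ℝ} {K : ℝ → E →L[𝕜] F} {g : ℝ → E}
    (hK : IntervalIntegrable K μ a b) (hg : ContinuousOn g (uIcc a b)) :
    IntervalIntegrable (fun s ↦ K s (g s)) μ a b := by
  obtain ⟨C, hC⟩ := isCompact_uIcc.exists_bound_of_continuousOn hg
  rw [intervalIntegrable_iff] at hK ⊢
  have hgm : AEStronglyMeasurable g (μ.restrict (uIoc a b)) :=
    (hg.mono uIoc_subset_uIcc).aestronglyMeasurable measurableSet_uIoc
  refine (hK.norm.mul_const C).mono'
    ((ContinuousLinearMap.id 𝕜 (E →L[𝕜] F)).aestronglyMeasurable_comp₂ hK.1 hgm) ?_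
  filter_upwards [ae_restrict_mem measurableSet_uIoc] with s hs
  exact (K s).le_opNorm_of_le (hC s (uIoc_subset_uIcc hs))

lemma intervalIntegrable_clm_apply_IccExtend {F : Type*} [NormedAddCommGroup F] [NormedSpace 𝕜 F]
    {μ : Measure ℝ} {a b : ℝ} {K : ℝ → E →L[𝕜] F} (hK : IntervalIntegrable K μ a b) (hab : a ≤ b)
    (f : C(Icc a b, E)) : IntervalIntegrable (fun s ↦ K s (IccExtend hab f s)) μ a b :=
  intervalIntegrable_clm_apply hK f.continuous.Icc_extend'.continuousOn

variable [NormedSpace ℝ E] {K : ℝ → E →L[𝕜] E} {a b : ℝ}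

lemma norm_integral_clm_apply_le {c t M : ℝ} (hK : IntervalIntegrable K volume c t) (hM : 0 ≤ M)
    (n : ℕ) {g : ℝ → E} (hg : ∀ s ∈ uIoc c t, ‖g s‖ ≤ M * |∫ r in c..s, ‖K r‖| ^ n / n !) :
    ‖∫ s in c..t, K s (g s)‖ ≤ M * |∫ r in c..t, ‖K r‖| ^ (n + 1) / (n + 1)! := by
  have hprim : ContinuousOn (fun s ↦ |∫ r in c..s, ‖K r‖|) (uIcc c t) :=
    (intervalIntegral.continuousOn_primitive_interval' hK.norm left_mem_uIcc).abs
  calc ‖∫ s in c..t, K s (g s)‖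
      ≤ |∫ s in c..t, M / n ! * (‖K s‖ * |∫ r in c..s, ‖K r‖| ^ n)| := by
        refine intervalIntegral.norm_integral_le_abs_of_norm_le ?_
          ((hK.norm.mul_continuousOn (hprim.pow n)).const_mul _)
        filter_upwards [ae_restrict_mem measurableSet_uIoc] with s hs
        exact ((K s).le_opNorm_of_le (hg s hs)).trans_eq (by ring)
    _ = M / n ! * (|∫ r in c..t, ‖K r‖| ^ (n + 1) / (n + 1)) := by
        rw [intervalIntegral.integral_const_mul, abs_mul, abs_of_nonneg (by positivity),
          abs_integral_mul_abs_primitive_pow hK.norm fun s ↦ norm_nonneg _]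
    _ = M * |∫ r in c..t, ‖K r‖| ^ (n + 1) / (n + 1)! := by
        rw [Nat.factorial_succ]
        push_cast
        field_simp

lemma continuous_integral_clm_apply_IccExtend (hK : IntervalIntegrable K volume a b)
    (c : Icc a b) (f : C(Icc a b, E)) :
    Continuous fun t : Icc a b ↦ ∫ s in c..t, K s (IccExtend (c.2.1.trans c.2.2) f s) := by
  have hprim := intervalIntegral.continuousOn_primitive_interval'
    (intervalIntegrable_clm_apply_IccExtend hK (c.2.1.trans c.2.2) f) (Icc_subset_uIcc c.2)
  exact (hprim.mono Icc_subset_uIcc).domRestrict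

variable [SMulCommClass ℝ 𝕜 E]

/-- The Volterra operator `f ↦ ∫ s in c..t, K s (f s)` of an integrable operator-valued kernel `K`,
with base point `c`, on the continuous functions on `[a, b]`. -/
noncomputable def volterra (K : ℝ → E →L[𝕜] E) (hK : IntervalIntegrable K volume a b)
    (c : Icc a b) : C(Icc a b, E) →L[𝕜] C(Icc a b, E) :=
  LinearMap.mkContinuous
    { toFun f :=
        ⟨fun t ↦ ∫ s in c..t, K s (IccExtend (c.2.1.trans c.2.2) f s),
          continuous_integral_clm_apply_IccExtend hK c f⟩
      map_add' f g := by
        ext t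
        have hint (f : C(Icc a b, E)) := intervalIntegrable_of_mem_Icc
          (intervalIntegrable_clm_apply_IccExtend hK (c.2.1.trans c.2.2) f) c t
        simpa [IccExtend] using intervalIntegral.integral_add (hint f) (hint g)
      map_smul' z f := by
        ext t
        simp [IccExtend] }
    |∫ s in a..b, ‖K s‖| fun f ↦ (ContinuousMap.norm_le _ (by positivity)).2 fun t ↦ by
      have hle := norm_integral_clm_apply_le (intervalIntegrable_of_mem_Icc hK c t) (norm_nonneg f)
        0 (g := IccExtend (c.2.1.trans c.2.2) f) fun s _ ↦ by
          simpa [IccExtend] using f.norm_coe_le_norm _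
      calc _ ≤ ‖f‖ * |∫ s in c..t, ‖K s‖| := by simpa using hle
        _ ≤ |∫ s in a..b, ‖K s‖| * ‖f‖ := by
          rw [mul_comm]
          gcongr ?_ * _
          exact abs_integral_norm_le_of_mem_Icc hK c t

lemma volterra_apply (hK : IntervalIntegrable K volume a b) (c : Icc a b) (f : C(Icc a b, E))
    (t : Icc a b) :
    volterra K hK c f t = ∫ s in c..t, K s (IccExtend (c.2.1.trans c.2.2) f s) :=
  rfl

lemma volterra_add_smul {P Q : ℝ → E →L[𝕜] E} (hP : IntervalIntegrable P volume a b)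
    (hQ : IntervalIntegrable Q volume a b) (c : Icc a b) (z : 𝕜) :
    volterra (P + z • Q) (hP.add (hQ.smul z)) c =
      volterra P hP c + z • volterra Q hQ c := by
  ext f t
  have hint {K : ℝ → E →L[𝕜] E} (hK : IntervalIntegrable K volume a b) :=
    intervalIntegrable_of_mem_Icc
      (intervalIntegrable_clm_apply_IccExtend hK (c.2.1.trans c.2.2) f) c t
  simpa [volterra_apply] using intervalIntegral.integral_add (hint hP) ((hint hQ).smul z)

lemma norm_volterra_pow_apply_le (hK : IntervalIntegrable K volume a b) (c : Icc a b) (n : ℕ)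
    (f : C(Icc a b, E)) (t : Icc a b) :
    ‖(volterra K hK c ^ n) f t‖ ≤ ‖f‖ * |∫ s in c..t, ‖K s‖| ^ n / n ! := by
  induction n generalizing t with
  | zero => simpa using f.norm_coe_le_norm t
  | succ n ih =>
    rw [pow_succ', mul_apply_eq_comp, volterra_apply]
    refine norm_integral_clm_apply_le (intervalIntegrable_of_mem_Icc hK c t) (norm_nonneg f) n
      fun s hs ↦ ?_
    have hs' : s ∈ Icc a b := uIcc_subset_Icc c.2 t.2 (uIoc_subset_uIcc hs)
    rw [IccExtend_of_mem _ _ hs']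
    exact ih ⟨s, hs'⟩

lemma norm_volterra_pow_le (hK : IntervalIntegrable K volume a b) (c : Icc a b) (n : ℕ) :
    ‖volterra K hK c ^ n‖ ≤ |∫ s in a..b, ‖K s‖| ^ n / n ! := by
  refine ContinuousLinearMap.opNorm_le_bound _ (by positivity) fun f ↦
    (ContinuousMap.norm_le _ (by positivity)).2 fun t ↦ ?_
  calc ‖(volterra K hK c ^ n) f t‖
      ≤ ‖f‖ * |∫ s in c..t, ‖K s‖| ^ n / n ! := norm_volterra_pow_apply_le hK c n f t
    _ ≤ ‖f‖ * |∫ s in a..b, ‖K s‖| ^ n / n ! := by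
        gcongr ‖f‖ * ?_ ^ n / (n !)
        exact abs_integral_norm_le_of_mem_Icc hK c t
    _ = |∫ s in a..b, ‖K s‖| ^ n / n ! * ‖f‖ := by ring

variable [CompleteSpace E]

lemma isUnit_one_sub_volterra (hK : IntervalIntegrable K volume a b) (c : Icc a b) :
    IsUnit (1 - volterra K hK c) :=
  isUnit_one_sub_of_summable_norm_pow <|
    (Real.summable_pow_div_factorial _).of_nonneg_of_le (fun _ ↦ norm_nonneg _)
      (norm_volterra_pow_le hK c)

/-- The solution on `[a, b]` of the linear system `y t = y₀ + ∫ s in c..t, K s (y s)`, obtained by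
inverting `1 - volterra K`. -/
noncomputable def volterraSolution (K : ℝ → E →L[𝕜] E) (hK : IntervalIntegrable K volume a b)
    (c : Icc a b) (y₀ : E) : C(Icc a b, E) :=
  Ring.inverse (1 - volterra K hK c) (.const _ y₀)

lemma volterraSolution_apply_eq (hK : IntervalIntegrable K volume a b) (c : Icc a b) {y : ℝ → E}
    (hy : ContinuousOn y (Icc a b)) {y₀ : E}
    (heq : ∀ t ∈ Icc a b, y t = y₀ + ∫ s in c..t, K s (y s)) (t : Icc a b) :
    volterraSolution K hK c y₀ t = y t := by
  set Y : C(Icc a b, E) := ⟨(Icc a b).domRestrict y, hy.domRestrict⟩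
  have hvolterra : ∀ t, volterra K hK c Y t = ∫ s in c..t, K s (y s) := fun t ↦
    intervalIntegral.integral_congr fun s hs ↦ by
      simp [IccExtend_of_mem _ _ (uIcc_subset_Icc c.2 t.2 hs), Y]
  have hY : (1 - volterra K hK c) Y = .const _ y₀ := by
    ext t
    simp [hvolterra, Y, heq t t.2]
  rw [volterraSolution, ← hY, ← mul_apply_eq_comp,
    Ring.inverse_mul_cancel _ (isUnit_one_sub_volterra hK c)]
  rfl

theorem differentiable_volterraSolution {P Q : ℝ → E →L[𝕜] E}
    (hP : IntervalIntegrable P volume a b) (hQ : IntervalIntegrable Q volume a b) (c : Icc a b)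
    {y₀ : 𝕜 → E} (hy₀ : Differentiable 𝕜 y₀) :
    Differentiable 𝕜 fun z : 𝕜 ↦
      volterraSolution (P + z • Q) (hP.add (hQ.smul z)) c (y₀ z) := by
  have hop : Differentiable 𝕜 fun z : 𝕜 ↦ volterra (P + z • Q) (hP.add (hQ.smul z)) c := by
    rw [funext (volterra_add_smul hP hQ c)]
    exact differentiable_add_smul (𝕜 := 𝕜) (volterra P hP c) (volterra Q hQ c)
  have hconst : Differentiable 𝕜 fun z ↦ ContinuousMap.const (Icc a b) (y₀ z) :=
    (ContinuousLinearMap.const (R := 𝕜) (M := E) (Icc a b)).differentiable.comp hy₀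
  exact differentiable_inverse_one_sub_apply hop (fun _ ↦ isUnit_one_sub_volterra _ c) hconst

end Volterra

section Schrodinger

variable {𝕜 : Type*} [RCLike 𝕜]

/-- The pair `(u, v)` solves `-u'' + q u = 0` in the Carathéodory sense, with `v` the
(absolutely continuous) derivative of `u`. -/
structure IsSchrodingerSolution_s6 (q u v : ℝ → 𝕜) : Prop where
  hasDerivAt (x : ℝ) : HasDerivAt u (v x) x
  eq_add_integral (x y : ℝ) : v x = v y + ∫ t in y..x, q t * u t

/-- The coefficient of `q` in the first-order form `(u, v)' = (v, q u)` of `-u'' + q u = 0`. -/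
def potentialCoeff (𝕜 : Type*) [RCLike 𝕜] : 𝕜 × 𝕜 →L[𝕜] 𝕜 × 𝕜 :=
  (ContinuousLinearMap.inr 𝕜 𝕜 𝕜).comp (.fst 𝕜 𝕜 𝕜)

/-- The matrix `(u, v) ↦ (v, q u)` of the first-order form of `-u'' + q u = 0`. -/
def companion (q : 𝕜) : 𝕜 × 𝕜 →L[𝕜] 𝕜 × 𝕜 :=
  (ContinuousLinearMap.inl 𝕜 𝕜 𝕜).comp (.snd 𝕜 𝕜 𝕜) + q • potentialCoeff 𝕜

lemma companion_apply (q : 𝕜) (p : 𝕜 × 𝕜) : companion q p = (p.2, q * p.1) := by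
  simp [companion, potentialCoeff]

lemma companion_add_mul (w z v : 𝕜) :
    companion (w + z * v) = companion w + z • v • potentialCoeff 𝕜 := by
  rw [companion, companion]
  module

lemma intervalIntegrable_smul_potentialCoeff {q : ℝ → 𝕜} {μ : Measure ℝ} {a b : ℝ}
    (hq : IntervalIntegrable q μ a b) :
    IntervalIntegrable (fun t ↦ q t • potentialCoeff 𝕜) μ a b :=
  ⟨hq.1.smul_const _, hq.2.smul_const _⟩

lemma intervalIntegrable_companion {q : ℝ → 𝕜} {a b : ℝ}
    (hq : IntervalIntegrable q volume a b) :
    IntervalIntegrable (fun t ↦ companion (q t)) volume a b :=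
  intervalIntegrable_const.add (intervalIntegrable_smul_potentialCoeff hq)

namespace IsSchrodingerSolution_s6

lemma ofReal {q u v : ℝ → ℝ} (h : IsSchrodingerSolution_s6 q u v) :
    IsSchrodingerSolution_s6 (fun t ↦ (q t : ℂ)) (fun t ↦ (u t : ℂ)) fun t ↦ (v t : ℂ) where
  hasDerivAt x := (h.hasDerivAt x).ofReal_comp
  eq_add_integral x y := by
    simp only [← Complex.ofReal_mul]
    rw [h.eq_add_integral x y, Complex.ofReal_add, intervalIntegral.integral_ofReal]

variable {q u v : ℝ → 𝕜}

lemma continuous_fst (h : IsSchrodingerSolution_s6 q u v) : Continuous u :=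
  continuous_iff_continuousAt.2 fun x ↦ (h.hasDerivAt x).continuousAt

lemma continuous_snd (h : IsSchrodingerSolution_s6 q u v) (hq : LocallyIntegrable q) :
    Continuous v := by
  rw [funext fun x ↦ h.eq_add_integral x 0]
  exact continuous_const.add <| intervalIntegral.continuous_primitive
    (fun a b ↦ (intervalIntegrable_of_locallyIntegrable hq a b).mul_continuousOn
      h.continuous_fst.continuousOn) 0

lemma prodMk_eq_add_integral (h : IsSchrodingerSolution_s6 q u v) (hq : LocallyIntegrable q)
    (c t : ℝ) : (u t, v t) = (u c, v c) + ∫ s in c..t, companion (q s) (u s, v s) := by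
  have hu : ∫ s in c..t, v s = u t - u c :=
    intervalIntegral.integral_eq_sub_of_hasDerivAt (fun s _ ↦ h.hasDerivAt s)
      ((h.continuous_snd hq).intervalIntegrable c t)
  have hint : IntervalIntegrable (fun s ↦ companion (q s) (u s, v s)) volume c t :=
    intervalIntegrable_clm_apply
      (intervalIntegrable_companion (intervalIntegrable_of_locallyIntegrable hq c t))
      (h.continuous_fst.prodMk (h.continuous_snd hq)).continuousOn
  have hfst := (ContinuousLinearMap.fst ℝ 𝕜 𝕜).intervalIntegral_comp_comm hint
  have hsnd := (ContinuousLinearMap.snd ℝ 𝕜 𝕜).intervalIntegral_comp_comm hint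
  simp only [companion_apply, ContinuousLinearMap.coe_fst', ContinuousLinearMap.coe_snd']
    at hfst hsnd ⊢
  ext
  · rw [Prod.fst_add, ← hfst, hu, add_sub_cancel]
  · rw [Prod.snd_add, ← hsnd, ← h.eq_add_integral]

lemma volterraSolution_eq (h : IsSchrodingerSolution_s6 q u v) (hq : LocallyIntegrable q) {a b : ℝ}
    (c t : Set.Icc a b) :
    volterraSolution (fun s ↦ companion (q s))
        (intervalIntegrable_companion (intervalIntegrable_of_locallyIntegrable hq a b)) c
        (u c, v c) t = (u t, v t) :=
  volterraSolution_apply_eq _ c (y := fun t ↦ (u t, v t))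
    (h.continuous_fst.prodMk (h.continuous_snd hq)).continuousOn
    (fun t _ ↦ h.prodMk_eq_add_integral hq c t) t

end IsSchrodingerSolution_s6

end Schrodinger

lemma locallyIntegrable_ofReal {X : Type*} [TopologicalSpace X] [MeasurableSpace X] {μ : Measure X}
    {f : X → ℝ} (hf : LocallyIntegrable f μ) : LocallyIntegrable (fun x ↦ (f x : ℂ)) μ := fun x ↦
  (hf x).imp fun _ hs ↦ ⟨hs.1, hs.2.ofReal⟩

lemma analyticAt_of_ofReal_eq {F : ℂ → ℂ} (hF : Differentiable ℂ F) {g : ℝ → ℝ}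
    (h : ∀ s : ℝ, F s = g s) (s : ℝ) : AnalyticAt ℝ g s := by
  have hre := (hF.analyticAt s).re_ofReal
  simpa only [h, Complex.ofReal_re] using hre

theorem solution_entire_in_coupling_general {W V : ℝ → ℂ} (hW : LocallyIntegrable W)
    (hV : LocallyIntegrable V) {α β : ℂ → ℂ} (hα : Differentiable ℂ α) (hβ : Differentiable ℂ β)
    (c x : ℝ) :
    ∃ F G : ℂ → ℂ, Differentiable ℂ F ∧ Differentiable ℂ G ∧
      ∀ (lam : ℂ) (u v : ℝ → ℂ), IsSchrodingerSolution_s6 (fun t ↦ W t + lam * V t) u v →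
        u c = α lam → v c = β lam → F lam = u x ∧ G lam = v x := by
  let c' : Set.Icc (c ⊓ x) (c ⊔ x) := ⟨c, Set.left_mem_uIcc⟩
  let x' : Set.Icc (c ⊓ x) (c ⊔ x) := ⟨x, Set.right_mem_uIcc⟩
  have hWint := intervalIntegrable_of_locallyIntegrable hW (c ⊓ x) (c ⊔ x)
  have hVint := intervalIntegrable_of_locallyIntegrable hV (c ⊓ x) (c ⊔ x)
  have hY := differentiable_volterraSolution (intervalIntegrable_companion hWint)
    (intervalIntegrable_smul_potentialCoeff hVint) c' (hα.prodMk hβ)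
  have hYx := (ContinuousMap.evalCLM ℂ x').differentiable.comp hY
  refine ⟨_, _, hYx.fst, hYx.snd, fun lam u v h hu hv ↦ ?_⟩
  rw [← Prod.mk.injEq]
  have hq : LocallyIntegrable fun t ↦ W t + lam * V t := hW.add (hV.smul lam)
  have heq := h.volterraSolution_eq hq c' x'
  simp only [companion_add_mul, hu, hv, c', x'] at heq
  exact heq

/-- For fixed `x`, the solution data `u(x,λ)`, `v(x,λ)` of `-u'' + (W + λV) u = 0` are
restrictions to `ℝ` of entire functions of `λ`; in particular they are real-analytic in `λ`. -/
theorem solution_entire_in_coupling (W V : ℝ → ℝ) (c θ : ℝ)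
    (hW : LocallyIntegrable W volume) (hV : LocallyIntegrable V volume)
    (u v : ℝ → ℝ → ℝ)
    (hu : ∀ (lam : ℝ) (x : ℝ), HasDerivAt (fun s => u s lam) (v x lam) x)
    (hv : ∀ (lam : ℝ) (x y : ℝ),
      v x lam = v y lam + ∫ t in y..x, (W t + lam * V t) * u t lam)
    (hu0 : ∀ lam : ℝ, u c lam = Real.sin θ)
    (hv0 : ∀ lam : ℝ, v c lam = Real.cos θ) :
    ∀ x : ℝ,
      (∃ F G : ℂ → ℂ, Differentiable ℂ F ∧ Differentiable ℂ G ∧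
        ∀ lam : ℝ, F (lam : ℂ) = (u x lam : ℂ) ∧ G (lam : ℂ) = (v x lam : ℂ)) ∧
      (∀ lam : ℝ, AnalyticAt ℝ (fun s : ℝ => u x s) lam ∧
        AnalyticAt ℝ (fun s : ℝ => v x s) lam) := by
  intro x
  obtain ⟨F, G, hF, hG, hFG⟩ := solution_entire_in_coupling_general (locallyIntegrable_ofReal hW)
    (locallyIntegrable_ofReal hV) (differentiable_const (Real.sin θ : ℂ))
    (differentiable_const (Real.cos θ : ℂ)) c x
  have hsol (lam : ℝ) : IsSchrodingerSolution_s6 (fun t ↦ W t + lam * V t) (u · lam) (v · lam) :=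
    ⟨hu lam, hv lam⟩
  have hreal (lam : ℝ) : F lam = u x lam ∧ G lam = v x lam :=
    hFG lam _ _ (by simpa using (hsol lam).ofReal) (by simp [hu0]) (by simp [hv0])
  exact ⟨⟨F, G, hF, hG, hreal⟩, fun lam ↦ ⟨analyticAt_of_ofReal_eq hF (fun s ↦ (hreal s).1) lam,
    analyticAt_of_ofReal_eq hG (fun s ↦ (hreal s).2) lam⟩⟩
end
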